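/- Suppose the digraph is acyclic and the first n−1 edges form a rooted in-branching with root the vertex indexed n−1. Let e_s and e_t be chords (indices s, t ≥ n−1) that are siblings of branch edges e_p and e_q respectively (indices p, q ≤ n−2, with tail e_s = tail e_p, tail e_t = tail e_q, and p ≠ q). If the entry R q s of the matrix R is nonzero, then the entry R p t equals 0. -/

import Mathlib

open Matrix

lemma aux_pinv {a b c : Type*} [Fintype a] [Fintype b] [DecidableEq b] [Fintype c]
    (A : Matrix a b ℝ) (P : Matrix b a ℝ) (C : Matrix a c ℝ) (Y : Matrix b c ℝ)
    (hPA : P * A = 1) (hY : C = A * Y) : (Aᵀ * A)⁻¹ * Aᵀ * C = P * C := by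
  have hu : IsUnit (Aᵀ * A) := by
    rw [← Matrix.mulVec_injective_iff_isUnit]
    intro x y hxy
    have h0 : (Aᵀ * A) *ᵥ (x - y) = 0 := by
      rw [Matrix.mulVec_sub]; exact sub_eq_zero.mpr hxy
    have h1 : A *ᵥ (x - y) = 0 := by
      rw [← Matrix.conjTranspose_eq_transpose_of_trivial] at h0
      exact (Matrix.conjTranspose_mul_self_mulVec_eq_zero A _).mp h0
    have h2 : P *ᵥ (A *ᵥ (x - y)) = 0 := by rw [h1, Matrix.mulVec_zero]
    rw [Matrix.mulVec_mulVec, hPA, Matrix.one_mulVec] at h2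
    exact sub_eq_zero.mp h2
  have hd : IsUnit (Aᵀ * A).det := (Matrix.isUnit_iff_isUnit_det _).mp hu
  rw [hY, ← Matrix.mul_assoc P, hPA, Matrix.one_mul, Matrix.mul_assoc, ← Matrix.mul_assoc Aᵀ,
    ← Matrix.mul_assoc, Matrix.nonsing_inv_mul _ hd, Matrix.one_mul]

/-- For an acyclic digraph whose first `n-1` edges form a rooted
in-branching with root the vertex `n-1`, let chords `e_s, e_t` (indices `≥ n-1`) be
siblings of branch edges `e_p, e_q` respectively (indices `≤ n-2`, `p ≠ q`).
If `R q s ≠ 0` then `R p t = 0`. -/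
theorem R_entry_zero_of_sibling_chords
    (n m : ℕ) (hn : 2 ≤ n) (hm : 1 ≤ m) (hmn : n - 1 ≤ m)
    (tail head : Fin m → Fin n) (hth : ∀ e, tail e ≠ head e)
    (w : Fin m → ℝ)
    (E : Matrix (Fin n) (Fin m) ℝ)
    (hE : ∀ v e, E v e = if v = tail e then 1 else if v = head e then -1 else 0)
    (hacyclic : ∀ v : Fin n,
      ¬ Relation.TransGen (fun a b => ∃ e, tail e = a ∧ head e = b) v v)
    (root : Fin n) (hroot : root = ⟨n - 1, by omega⟩)
    -- the first n-1 edges form a rooted in-branching with root `root`: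
    (hinj : Function.Injective (fun i : Fin (n - 1) => tail ⟨i.val, lt_of_lt_of_le i.2 hmn⟩))
    (hnotroot : ∀ i : Fin (n - 1), tail ⟨i.val, lt_of_lt_of_le i.2 hmn⟩ ≠ root)
    (hsurj : ∀ v : Fin n, v ≠ root → ∃ i : Fin (n - 1), tail ⟨i.val, lt_of_lt_of_le i.2 hmn⟩ = v)
    (hreach : ∀ v : Fin n, Relation.ReflTransGen
      (fun a b => ∃ e : Fin m, e.val < n - 1 ∧ tail e = a ∧ head e = b) v root)
    (Eτ : Matrix (Fin n) (Fin (n - 1)) ℝ)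
    (hEτ : Eτ = E.submatrix id (fun i : Fin (n - 1) => ⟨i.val, lt_of_lt_of_le i.2 hmn⟩))
    (Ec : Matrix (Fin n) (Fin (m - (n - 1))) ℝ)
    (hEc : Ec = E.submatrix id
      (fun j : Fin (m - (n - 1)) => ⟨n - 1 + j.val, by have := j.2; omega⟩))
    (Tτ : Matrix (Fin (n - 1)) (Fin (m - (n - 1))) ℝ)
    (hTτ : Tτ = (Eτᵀ * Eτ)⁻¹ * Eτᵀ * Ec)
    (R : Matrix (Fin (n - 1)) (Fin m) ℝ)
    (hR : ∀ (i : Fin (n - 1)) (j : Fin m), R i j =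
      if h : j.val < n - 1 then (if i.val = j.val then 1 else 0)
      else Tτ i ⟨j.val - (n - 1), by have := j.2; omega⟩)
    (p q s t : Fin m) (hp : p.val < n - 1) (hq : q.val < n - 1)
    (hs : n - 1 ≤ s.val) (ht : n - 1 ≤ t.val) (hpq : p ≠ q)
    (hsp : tail s = tail p) (htq : tail t = tail q)
    (hRqs : R ⟨q.val, hq⟩ s ≠ 0) :
    R ⟨p.val, hp⟩ t = 0 := by
  classical
  have hE' : ∀ v e, E v e = (if v = tail e then 1 else 0) - (if v = head e then 1 else 0) := by
    intro v e
    rw [hE]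
    by_cases h1 : v = tail e
    · have h2 : v ≠ head e := by rw [h1]; exact hth e
      simp [h1, hth e]
    · rw [if_neg h1, if_neg h1]
      by_cases h2 : v = head e <;> simp [h2]
  set st : Fin n → Fin n → Prop :=
    fun a b => ∃ e : Fin m, e.val < n - 1 ∧ tail e = a ∧ head e = b with hst
  have hmono : ∀ a b, Relation.ReflTransGen st a b →
      Relation.ReflTransGen (fun a b => ∃ e, tail e = a ∧ head e = b) a b := by
    intro a b h
    refine Relation.ReflTransGen.mono ?_ _ _ h
    rintro a b ⟨e, _, h⟩
    exact ⟨e, h⟩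
  let ix : Fin (n - 1) → Fin m := fun i => ⟨i.val, lt_of_lt_of_le i.2 hmn⟩
  let P : Matrix (Fin (n - 1)) (Fin n) ℝ :=
    fun i v => if Relation.ReflTransGen st v (tail (ix i)) then 1 else 0
  have hPE : ∀ i e, (P * E) i e = P i (tail e) - P i (head e) := by
    intro i e
    simp only [Matrix.mul_apply, hE', mul_sub, Finset.sum_sub_distrib]
    simp
  have hPA : P * Eτ = 1 := by
    ext i j
    have h1 : (P * Eτ) i j = (P * E) i (ix j) := by
      rw [hEτ]; rfl
    rw [h1, hPE]
    have hj : st (tail (ix j)) (head (ix j)) := ⟨ix j, j.2, rfl, rfl⟩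
    by_cases hij : i = j
    · subst hij
      have hno : ¬ Relation.ReflTransGen st (head (ix i)) (tail (ix i)) := fun h =>
        hacyclic (tail (ix i)) (Relation.TransGen.head' ⟨ix i, rfl, rfl⟩ (hmono _ _ h))
      simp [P, hno, Relation.ReflTransGen.refl]
    · rw [Matrix.one_apply_ne hij]
      have hiff : Relation.ReflTransGen st (tail (ix j)) (tail (ix i)) ↔
          Relation.ReflTransGen st (head (ix j)) (tail (ix i)) := by
        constructor
        · intro h
          rcases Relation.ReflTransGen.cases_head h with h | ⟨c, ⟨e, he, h1, h2⟩, h3⟩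
          · exact absurd (hinj h).symm hij
          · have : (⟨e.val, he⟩ : Fin (n - 1)) = j := hinj h1
            have h4 : ix j = e := by rw [← this]
            rw [h4, h2]; exact h3
        · intro h
          exact Relation.ReflTransGen.head hj h
      simp only [P, hiff, sub_self]
  have hy : ∀ v : Fin n, ∃ y : Fin (n - 1) → ℝ,
      Eτ *ᵥ y = Pi.single v 1 - Pi.single root 1 := by
    intro v
    induction hreach v using Relation.ReflTransGen.head_induction_on with
    | refl => exact ⟨0, by simp⟩
    | head h _ ih =>
      obtain ⟨e, he, h1, h2⟩ := h
      obtain ⟨y, hy⟩ := ih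
      refine ⟨Pi.single ⟨e.val, he⟩ 1 + y, ?_⟩
      rw [Matrix.mulVec_add, hy, Matrix.mulVec_single_one]
      ext u
      simp only [hEτ, Pi.add_apply, Matrix.col_apply, Matrix.submatrix_apply, hE', h1, h2,
        Pi.sub_apply, Pi.single_apply, id]
      ring
  choose y hy using hy
  have hY : ∃ Y : Matrix (Fin (n - 1)) (Fin m) ℝ, E = Eτ * Y := by
    refine ⟨fun i e => (y (tail e) - y (head e)) i, ?_⟩
    ext v e
    have h1 : (Eτ *ᵥ (y (tail e) - y (head e))) v = E v e := by
      rw [Matrix.mulVec_sub, hy, hy, hE']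
      simp [Pi.single_apply]
    rw [← h1]; rfl
  obtain ⟨Y, hY⟩ := hY
  have hT : Tτ = P * Ec := by
    rw [hTτ]
    refine aux_pinv Eτ P Ec (Y.submatrix id
      (fun j : Fin (m - (n - 1)) => ⟨n - 1 + j.val, by have := j.2; omega⟩)) hPA ?_
    rw [hEc]
    conv_lhs => rw [hY]
    rfl
  have hRe : ∀ i (j : Fin m), n - 1 ≤ j.val → R i j = P i (tail j) - P i (head j) := by
    intro i j hj
    rw [hR, dif_neg (by omega), hT, ← hPE, hEc]
    simp only [Matrix.mul_apply, Matrix.submatrix_apply, id]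
    refine Finset.sum_congr rfl fun v _ => ?_
    congr 2
    ext
    simp only
    omega
  have key : ∀ (i : Fin (n - 1)) (j : Fin m), n - 1 ≤ j.val → R i j ≠ 0 →
      Relation.ReflTransGen (fun a b => ∃ e, tail e = a ∧ head e = b) (tail j) (tail (ix i)) := by
    intro i j hj h
    by_contra hc
    have h1 : ¬ Relation.ReflTransGen st (tail j) (tail (ix i)) := fun h => hc (hmono _ _ h)
    have h2 : ¬ Relation.ReflTransGen st (head j) (tail (ix i)) := fun h =>
      hc (Relation.ReflTransGen.head ⟨j, rfl, rfl⟩ (hmono _ _ h))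
    apply h
    rw [hRe i j hj]
    simp [P, h1, h2]
  by_contra hne
  have k1 := key _ _ hs hRqs
  have k2 := key _ _ ht hne
  rw [hsp] at k1
  rw [htq] at k2
  change Relation.ReflTransGen _ (tail p) (tail q) at k1
  change Relation.ReflTransGen _ (tail q) (tail p) at k2
  rcases Relation.reflTransGen_iff_eq_or_transGen.mp k1 with h | h
  · have := @hinj ⟨q.val, hq⟩ ⟨p.val, hp⟩ h
    apply hpq
    ext
    exact (congrArg Fin.val this).symm
  · exact hacyclic _ (h.trans_left k2)
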